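/- Let q be a prime power, k, h ≥ 2, and V a kh-dimensional F_q-vector space. If P is a pseudo-arc of PG(kh-1,q) = PG(V), i.e. a set of h-dimensional F_q-subspaces of V any k of which span V, then |P| ≤ q^h + k if q is even, and |P| ≤ q^h + k - 1 if q is odd. -/

import Mathlib

lemma spread_aux {F Q ι : Type} [Field F] [Fintype F] [AddCommGroup Q] [Module F Q]
    [Module.Finite F Q] [Fintype ι] (h : ℕ) (hh : 2 ≤ h) (hQ : 2 * h ≤ Module.finrank F Q)
    (W : ι → Submodule F Q) (hW : ∀ i, Module.finrank F (W i) ≤ h)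
    (hs : ∀ i j, i ≠ j → W i ⊔ W j = ⊤) : Fintype.card ι ≤ Fintype.card F ^ h + 1 := by
  classical
  by_contra! hcon
  have : Finite Q := Module.finite_of_finite F
  have : Fintype Q := Fintype.ofFinite Q
  have key : ∀ i j, i ≠ j → Module.finrank F Q = 2 * h ∧ Module.finrank F (W i) = h ∧
      W i ⊓ W j = ⊥ := by
    intro i j hij
    have h1 := Submodule.finrank_sup_add_finrank_inf_eq (W i) (W j)
    rw [hs i j hij, finrank_top] at h1
    have h2 := hW i
    have h3 := hW j
    refine ⟨by omega, by omega, ?_⟩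
    apply Submodule.finrank_eq_zero.mp
    omega
  have hnt : Nontrivial ι := Fintype.one_lt_card_iff_nontrivial.mp (by omega)
  obtain ⟨a, b, hab⟩ := exists_pair_ne ι
  have hQ2 := (key a b hab).1
  have hWi : ∀ i, Module.finrank F (W i) = h := fun i => by
    obtain ⟨j, hj⟩ := exists_ne i
    exact (key i j hj.symm).2.1
  set S : ι → Finset Q := fun i => (Finset.univ.filter (fun v => v ∈ W i)).erase 0 with hS
  have hc : ∀ i, (S i).card = Fintype.card F ^ h - 1 := by
    intro i
    rw [hS]
    simp only
    rw [Finset.card_erase_of_mem (by simp), ← Fintype.card_subtype]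
    have := Module.card_eq_pow_finrank (K := F) (V := W i)
    rw [hWi i] at this
    rw [← this]
  have hd : (Finset.univ.biUnion S).card = ∑ i, (S i).card := by
    apply Finset.card_biUnion
    intro i _ j _ hij
    change Disjoint (S i) (S j)
    rw [Finset.disjoint_left]
    intro v hv hv'
    simp only [hS, Finset.mem_erase, Finset.mem_filter, Finset.mem_univ, true_and] at hv hv'
    have : v ∈ W i ⊓ W j := ⟨hv.2, hv'.2⟩
    rw [(key i j hij).2.2] at this
    exact hv.1 (by simpa using this)
  have hle : (Finset.univ.biUnion S).card ≤ ((Finset.univ : Finset Q).erase 0).card := by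
    apply Finset.card_le_card
    intro v hv
    simp [hS] at hv ⊢
    tauto
  rw [Finset.card_erase_of_mem (by simp), Finset.card_univ,
    Module.card_eq_pow_finrank (K := F) (V := Q), hQ2, hd] at hle
  simp only [hc, Finset.sum_const, Finset.card_univ, smul_eq_mul] at hle
  have hq : 1 < Fintype.card F ^ h := Nat.one_lt_pow (by omega) Fintype.one_lt_card
  obtain ⟨m, hm⟩ : ∃ m, Fintype.card F ^ h = m + 1 := ⟨_, (Nat.sub_add_cancel hq.le).symm⟩
  rw [mul_comm 2 h, pow_mul, hm] at hle
  rw [hm] at hcon hq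
  have : (m + 1) ^ 2 - 1 = (m + 2) * m := by
    rw [Nat.sub_eq_iff_eq_add (Nat.one_le_pow _ _ (by omega))]; ring
  rw [this] at hle
  simp only [Nat.add_sub_cancel] at hle
  have := Nat.le_of_mul_le_mul_right hle (by omega)
  omega

lemma finrank_sup_aux {F V : Type} [Field F] [AddCommGroup V] [Module F V] [Module.Finite F V]
    (h : ℕ) (S : Finset (Submodule F V)) (hS : ∀ W ∈ S, Module.finrank F W = h) :
    Module.finrank F (S.sup id : Submodule F V) ≤ S.card * h := by
  classical
  induction S using Finset.induction_on with
  | empty => simp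
  | insert a s ha ih =>
    rw [Finset.sup_insert, Finset.card_insert_of_notMem ha]
    have h1 := Submodule.finrank_add_le_finrank_add_finrank a (s.sup id)
    have h2 := ih (fun W hW => hS W (Finset.mem_insert_of_mem hW))
    have h3 := hS a (Finset.mem_insert_self _ _)
    simp only [id]
    linarith


/-- **Thas' bound.** If `P` is a pseudo-arc of `PG(kh-1, q)`, i.e. a
set of `h`-dimensional `F_q`-subspaces of a `kh`-dimensional `F_q`-vector space `V`
any `k` of which span `V`, then `|P| ≤ q^h + k` if `q` is even and
`|P| ≤ q^h + k - 1` if `q` is odd. -/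
theorem stmt17 (q k h : ℕ) (hq : IsPrimePow q) (hk : 2 ≤ k) (hh : 2 ≤ h)
    (F : Type) [Field F] [Fintype F] (hF : Fintype.card F = q)
    (V : Type) [AddCommGroup V] [Module F V] (hV : Module.finrank F V = k * h)
    (P : Set (Submodule F V))
    (hrk : ∀ W ∈ P, Module.finrank F W = h)
    (hsp : ∀ T ⊆ P, T.ncard = k → sSup T = ⊤) :
    (Even q → P.ncard ≤ q ^ h + k) ∧ (Odd q → P.ncard ≤ q ^ h + k - 1) := by
  classical
  suffices hmain : P.ncard ≤ q ^ h + k - 1 from ⟨fun _ => by omega, fun _ => hmain⟩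
  have : Module.Finite F V := Module.finite_of_finrank_pos (by rw [hV]; positivity)
  have : Finite V := Module.finite_of_finite F
  have : Finite (Submodule F V) := Finite.of_injective _ SetLike.coe_injective
  have hfin : P.Finite := Set.toFinite P
  obtain ⟨P', rfl⟩ : ∃ P' : Finset (Submodule F V), (P' : Set _) = P :=
    ⟨hfin.toFinset, by simp⟩
  rw [Set.ncard_coe_finset]
  by_cases hP : P'.card < k
  · have : 0 < q ^ h := by have := hq.pos; positivity
    omega
  obtain ⟨S, hSP, hSc⟩ := Finset.exists_subset_card_eq (show k - 2 ≤ P'.card by omega)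
  set U : Submodule F V := S.sup id with hU
  have hUr := finrank_sup_aux h S (fun W hW => hrk W (hSP hW))
  rw [hSc, ← hU] at hUr
  have hq1 := Submodule.finrank_quotient_add_finrank U
  have hkh : (k - 2) * h + 2 * h = k * h := by
    rw [← add_mul]; congr 1; omega
  have := spread_aux (F := F) (Q := V ⧸ U) (ι := (P' \ S : Finset _)) h hh (by omega)
    (fun W => W.1.map U.mkQ) ?_ ?_
  · rw [Fintype.card_coe, Finset.card_sdiff_of_subset hSP, hF] at this
    omega
  · rintro ⟨W, hW⟩
    have := hrk W (by simp at hW; exact hW.1)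
    exact (Submodule.finrank_map_le _ _).trans this.le
  · rintro ⟨A, hA⟩ ⟨B, hB⟩ hAB
    have hAB' : A ≠ B := fun e => hAB (Subtype.ext e)
    rw [Finset.mem_sdiff] at hA hB
    have hn := hsp (↑(insert A (insert B S)) : Set _) ?_ ?_
    · rw [← Finset.sup_id_eq_sSup, Finset.sup_insert, Finset.sup_insert] at hn
      simp only [id, ← sup_assoc] at hn
      have := congrArg (Submodule.map U.mkQ) hn
      rw [Submodule.map_sup, Submodule.map_sup, Submodule.map_top, Submodule.range_mkQ] at this
      have hz : Submodule.map U.mkQ (S.sup id) = ⊥ := Submodule.mkQ_map_self U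
      change _ ⊔ Submodule.map U.mkQ (S.sup id) = _ at this
      rw [hz, sup_bot_eq] at this
      exact this
    · intro X hX
      simp only [Finset.coe_insert, Set.mem_insert_iff, Finset.mem_coe] at hX ⊢
      rcases hX with rfl | rfl | hX
      exacts [hA.1, hB.1, hSP hX]
    · rw [Set.ncard_coe_finset, Finset.card_insert_of_notMem, Finset.card_insert_of_notMem hB.2]
      · omega
      · simp [hAB', hA.2]
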